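/- arXiv:2410.08011 — 9 statements merged into one kernel-verified Lean document; each statement's English description precedes it below -/
import Mathlib

section
/- Let τ ∈ S_n, let s_k be a simple transposition (1 ≤ k ≤ n−1), let X ∈ ℂ^n, and set T(R) = T_τ(X) and T(W) = T_{s_k∘τ}(s_k·X). Then Σ_i(W) = Σ_i(R) for every row index i with 1 ≤ i ≤ n and i ≠ k. -/
/-- The orientation function `A_σ` of the graph `G_σ`:
`A_σ(r,s) = 1` if `σ⁻¹(r) > σ⁻¹(s)` and `A_σ(r,s) = -1` otherwise. -/
def Aperm (σ : Equiv.Perm ℕ) (r s : ℕ) : ℤ :=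
  if σ.symm s < σ.symm r then 1 else -1

/-- The Gelfand–Tsetlin tableau `T_σ(X)`: `tab n σ x k i` is the entry `y_{k,i}` in
row `k`, column `i`; row `n` is `x` and `y_{k-1,i} = y_{k,i} + (1 - A_σ(k,i))/2`. -/
noncomputable def tab (n : ℕ) (σ : Equiv.Perm ℕ) (x : ℕ → ℂ) (k i : ℕ) : ℂ :=
  if h : n ≤ k then x i
  else tab n σ x (k + 1) i + (1 - (Aperm σ (k + 1) i : ℂ)) / 2
termination_by n - k
decreasing_by omega

/-- `Σ_t`: the sum of the entries in row `t` of the tableau `T_σ(X)`. -/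
noncomputable def rowSum (n : ℕ) (σ : Equiv.Perm ℕ) (x : ℕ → ℂ) (t : ℕ) : ℂ :=
  ∑ i ∈ Finset.Icc 1 t, tab n σ x t i

theorem tab_closed (n : ℕ) (σ : Equiv.Perm ℕ) (x : ℕ → ℂ) (i : ℕ) (d : ℕ) :
    ∀ t, n - t = d →
      tab n σ x t i = x i + ∑ r ∈ Finset.Ioc t n, (1 - (Aperm σ r i : ℂ)) / 2 := by
  induction d with
  | zero =>
    intro t ht
    have h : n ≤ t := by omega
    rw [tab, dif_pos h, Finset.Ioc_eq_empty (by omega)]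
    simp
  | succ d ih =>
    intro t ht
    have h : ¬ n ≤ t := by omega
    have hI : Finset.Ioc t n = insert (t + 1) (Finset.Ioc (t + 1) n) := by
      ext a
      simp only [Finset.mem_insert, Finset.mem_Ioc]
      omega
    rw [tab, dif_neg h, ih (t + 1) (by omega), hI, Finset.sum_insert (by simp)]
    ring

theorem swap_le_iff (k t i : ℕ) (h : t ≠ k) : Equiv.swap k (k + 1) i ≤ t ↔ i ≤ t := by
  rw [Equiv.swap_apply_def]
  split_ifs <;> omega

theorem swap_one_le_iff (k i : ℕ) (h : 1 ≤ k) : 1 ≤ Equiv.swap k (k + 1) i ↔ 1 ≤ i := by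
  rw [Equiv.swap_apply_def]
  split_ifs <;> omega

theorem Aperm_swap (k : ℕ) (τ : Equiv.Perm ℕ) (r i : ℕ) :
    Aperm (Equiv.swap k (k + 1) * τ) r i =
      Aperm τ (Equiv.swap k (k + 1) r) (Equiv.swap k (k + 1) i) := rfl

/-- with `T(R) = T_τ(X)` and `T(W) = T_{s_k ∘ τ}(s_k · X)`, the row sums
satisfy `Σ_i(W) = Σ_i(R)` for `1 ≤ i ≤ n`, `i ≠ k`. -/
theorem stmt7 (n : ℕ) (hn : 2 ≤ n) (τ : Equiv.Perm ℕ)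
    (hτ : ∀ i ∉ Set.Icc 1 n, τ i = i) (k : ℕ) (hk1 : 1 ≤ k) (hk2 : k ≤ n - 1)
    (x : ℕ → ℂ) :
    ∀ i : ℕ, 1 ≤ i → i ≤ n → i ≠ k →
      rowSum n (Equiv.swap k (k + 1) * τ) (fun j => x (Equiv.swap k (k + 1) j)) i =
        rowSum n τ x i := by
  intro t _ _ htk
  unfold rowSum
  refine Finset.sum_equiv (Equiv.swap k (k + 1)) ?_ ?_
  · intro i
    rw [Finset.mem_Icc, Finset.mem_Icc, swap_le_iff k t i htk, swap_one_le_iff k i hk1]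
  · intro i _
    rw [tab_closed n _ _ _ _ t rfl, tab_closed n _ _ _ _ t rfl]
    congr 1
    refine Finset.sum_equiv (Equiv.swap k (k + 1)) ?_ ?_
    · intro r
      rw [Finset.mem_Ioc, Finset.mem_Ioc, swap_le_iff k n r (by omega), ← not_le, ← not_le,
        swap_le_iff k t r htk]
    · intro r _
      rw [Aperm_swap]
end

section
/- Let τ ∈ S_n, let s_k be a simple transposition (1 ≤ k ≤ n−1), let X ∈ ℂ^n, and set T(R) = T_τ(X) and T(W) = T_{s_k∘τ}(s_k·X). Then Σ_k(W) = Σ_k(R) + r_{n,k+1} − r_{n,k} + τ^{-1}(k+1) − τ^{-1}(k), where the integers τ^{-1}(k+1), τ^{-1}(k) ∈ {1,…,n} are viewed in ℂ. -/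
theorem tab_eq_sum (n : ℕ) (σ : Equiv.Perm ℕ) (x : ℕ → ℂ) (i : ℕ) (d : ℕ) :
    ∀ k, k + d = n → tab n σ x k i =
      x i + ∑ r ∈ Finset.Ioc k n, (if σ.symm i < σ.symm r then (0 : ℂ) else 1) := by
  induction d with
  | zero =>
    intro k hk
    obtain rfl : k = n := by omega
    rw [tab]; simp
  | succ d ih =>
    intro k hk
    have h1 : Finset.Ioc k n = insert (k + 1) (Finset.Ioc (k + 1) n) := by
      ext j; simp only [Finset.mem_Ioc, Finset.mem_insert]; omega
    rw [tab, dif_neg (by omega), ih (k + 1) (by omega), h1, Finset.sum_insert (by simp)]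
    unfold Aperm
    split_ifs <;> push_cast <;> ring

theorem count_lt (n : ℕ) (τ : Equiv.Perm ℕ) (hτ : ∀ i ∉ Set.Icc 1 n, τ i = i)
    (b : ℕ) (hb1 : 1 ≤ b) (hb2 : b ≤ n) :
    ∑ j ∈ Finset.Icc 1 n, (if τ.symm j < b then (1 : ℂ) else 0) = (b : ℂ) - 1 := by
  have hm : ∀ i, i ∈ Finset.Icc 1 n ↔ τ i ∈ Finset.Icc 1 n := by
    intro i
    have key : ∀ i, i ∉ Finset.Icc 1 n → τ i = i := fun i hi => hτ i (by simpa using hi)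
    constructor
    · intro h
      by_contra h2
      have := τ.injective (key _ h2)
      rw [this] at h2
      exact h2 h
    · intro h
      by_contra h2
      rw [key _ h2] at h
      exact h2 h
  rw [← Finset.sum_equiv (s := Finset.Icc 1 n) τ hm
    (f := fun j => if j < b then (1 : ℂ) else 0) (by intro i _; simp)]
  rw [Finset.sum_ite, Finset.sum_const_zero, Finset.sum_const]
  have : (Finset.Icc 1 n).filter (fun j => j < b) = Finset.Ico 1 b := by
    ext j; simp only [Finset.mem_filter, Finset.mem_Icc, Finset.mem_Ico]; omega
  rw [this]
  simp [Nat.cast_sub hb1]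

theorem symm_mem (n : ℕ) (τ : Equiv.Perm ℕ) (hτ : ∀ i ∉ Set.Icc 1 n, τ i = i)
    (k : ℕ) (hk : k ∈ Set.Icc 1 n) : τ.symm k ∈ Set.Icc 1 n := by
  by_contra h
  have h1 := hτ _ h
  rw [Equiv.apply_symm_apply] at h1
  exact h (h1 ▸ hk)

/-- with `T(R) = T_τ(X)` and `T(W) = T_{s_k ∘ τ}(s_k · X)`,
`Σ_k(W) = Σ_k(R) + r_{n,k+1} - r_{n,k} + τ⁻¹(k+1) - τ⁻¹(k)`. -/
theorem stmt8 (n : ℕ) (hn : 2 ≤ n) (τ : Equiv.Perm ℕ)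
    (hτ : ∀ i ∉ Set.Icc 1 n, τ i = i) (k : ℕ) (hk1 : 1 ≤ k) (hk2 : k ≤ n - 1)
    (x : ℕ → ℂ) :
    rowSum n (Equiv.swap k (k + 1) * τ) (fun j => x (Equiv.swap k (k + 1) j)) k =
      rowSum n τ x k + tab n τ x n (k + 1) - tab n τ x n k +
        ((τ.symm (k + 1) : ℂ) - (τ.symm k : ℂ)) := by
  have hka := symm_mem n τ hτ k ⟨hk1, by omega⟩
  have hkb := symm_mem n τ hτ (k + 1) ⟨by omega, by omega⟩
  have ca := count_lt n τ hτ _ hka.1 hka.2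
  have cb := count_lt n τ hτ _ hkb.1 hkb.2
  have hI : Finset.Icc 1 k = insert k (Finset.Ico 1 k) := by
    ext j; simp only [Finset.mem_Icc, Finset.mem_insert, Finset.mem_Ico]; omega
  have hJ : Finset.Ioc k n = insert (k + 1) (Finset.Ioc (k + 1) n) := by
    ext j; simp only [Finset.mem_Ioc, Finset.mem_insert]; omega
  have hN : Finset.Icc 1 n =
      insert k (insert (k + 1) (Finset.Ico 1 k ∪ Finset.Ioc (k + 1) n)) := by
    ext j
    simp only [Finset.mem_Icc, Finset.mem_insert, Finset.mem_union, Finset.mem_Ico,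
      Finset.mem_Ioc]
    omega
  have hd : Disjoint (Finset.Ico 1 k) (Finset.Ioc (k + 1) n) := by
    rw [Finset.disjoint_left]; intro j; simp only [Finset.mem_Ico, Finset.mem_Ioc]; omega
  have hn1 : k ∉ insert (k + 1) (Finset.Ico 1 k ∪ Finset.Ioc (k + 1) n) := by simp
  have hn2 : k + 1 ∉ Finset.Ico 1 k ∪ Finset.Ioc (k + 1) n := by simp
  rw [hN, Finset.sum_insert hn1, Finset.sum_insert hn2, Finset.sum_union hd] at ca cb
  have tn : ∀ i, tab n τ x n i = x i := by intro i; rw [tab]; simp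
  have hq : ∀ j, (Equiv.swap k (k + 1) * τ).symm j = τ.symm (Equiv.swap k (k + 1) j) := by
    intro j; rfl
  have hsI : ∀ i ∈ Finset.Ico 1 k, Equiv.swap k (k + 1) i = i := by
    intro i hi; rw [Finset.mem_Ico] at hi
    exact Equiv.swap_apply_of_ne_of_ne (by omega) (by omega)
  have hsJ : ∀ i ∈ Finset.Ioc (k + 1) n, Equiv.swap k (k + 1) i = i := by
    intro i hi; rw [Finset.mem_Ioc] at hi
    exact Equiv.swap_apply_of_ne_of_ne (by omega) (by omega)
  have hne : ∀ i j, i ≠ j → τ.symm i ≠ τ.symm j := fun i j h e => h (τ.symm.injective e)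
  have hW : rowSum n (Equiv.swap k (k + 1) * τ) (fun j => x (Equiv.swap k (k + 1) j)) k =
      (x (k + 1) + ((if τ.symm (k + 1) < τ.symm k then (0 : ℂ) else 1) +
        ∑ r ∈ Finset.Ioc (k + 1) n, (if τ.symm r < τ.symm (k + 1) then (1 : ℂ) else 0))) +
      ∑ i ∈ Finset.Ico 1 k, (x i + ((if τ.symm i < τ.symm k then (0 : ℂ) else 1) +
        ∑ r ∈ Finset.Ioc (k + 1) n, (if τ.symm i < τ.symm r then (0 : ℂ) else 1))) := by
    unfold rowSum
    rw [hI, Finset.sum_insert (by simp)]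
    congr 1
    · rw [tab_eq_sum n _ _ _ (n - k) k (by omega), hJ, Finset.sum_insert (by simp)]
      simp only [hq, Equiv.swap_apply_left, Equiv.swap_apply_right]
      congr 2
      refine Finset.sum_congr rfl fun r hr => ?_
      rw [hsJ r hr]
      rw [Finset.mem_Ioc] at hr
      have := hne r (k + 1) (by omega)
      split_ifs <;> first | rfl | omega
    · refine Finset.sum_congr rfl fun i hi => ?_
      rw [tab_eq_sum n _ _ _ (n - k) k (by omega), hJ, Finset.sum_insert (by simp)]
      simp only [hq, Equiv.swap_apply_right, hsI i hi]
      congr 2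
      refine Finset.sum_congr rfl fun r hr => ?_
      rw [hsJ r hr]
  have hR : rowSum n τ x k =
      (x k + ((if τ.symm k < τ.symm (k + 1) then (0 : ℂ) else 1) +
        ∑ r ∈ Finset.Ioc (k + 1) n, (if τ.symm r < τ.symm k then (1 : ℂ) else 0))) +
      ∑ i ∈ Finset.Ico 1 k, (x i + ((if τ.symm i < τ.symm (k + 1) then (0 : ℂ) else 1) +
        ∑ r ∈ Finset.Ioc (k + 1) n, (if τ.symm i < τ.symm r then (0 : ℂ) else 1))) := by
    unfold rowSum
    rw [hI, Finset.sum_insert (by simp)]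
    congr 1
    · rw [tab_eq_sum n _ _ _ (n - k) k (by omega), hJ, Finset.sum_insert (by simp)]
      congr 2
      refine Finset.sum_congr rfl fun r hr => ?_
      rw [Finset.mem_Ioc] at hr
      have := hne r k (by omega)
      split_ifs <;> first | rfl | omega
    · refine Finset.sum_congr rfl fun i hi => ?_
      rw [tab_eq_sum n _ _ _ (n - k) k (by omega), hJ, Finset.sum_insert (by simp)]
  have hc : ∀ c : ℕ, ∑ i ∈ Finset.Ico 1 k, (if τ.symm i < c then (0 : ℂ) else 1) =
      ∑ i ∈ Finset.Ico 1 k, (1 : ℂ) -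
        ∑ i ∈ Finset.Ico 1 k, (if τ.symm i < c then (1 : ℂ) else 0) := by
    intro c
    rw [← Finset.sum_sub_distrib]
    refine Finset.sum_congr rfl fun i _ => ?_
    split_ifs <;> ring
  rw [hW, hR, tn, tn]
  simp only [Finset.sum_add_distrib, hc]
  have hab := hne k (k + 1) (by omega)
  rw [if_neg (lt_irrefl _)] at ca cb
  rcases lt_or_gt_of_ne hab with h | h
  · rw [if_neg h.not_gt] at ca ⊢
    rw [if_pos h] at cb ⊢
    linear_combination cb - ca
  · rw [if_pos h] at ca ⊢
    rw [if_neg h.not_gt] at cb ⊢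
    linear_combination cb - ca
end

section
/- Let σ ∈ S_n, X ∈ ℂ^n, and T(L) = T_σ(X). Let 1 ≤ r < s ≤ n with A_σ(s,r) = −1, and let i_r, i_{r+1}, …, i_{s−1} be integers with 1 ≤ i_t ≤ t for each r ≤ t ≤ s−1. Then the array L' obtained from T_σ(X) by subtracting 1 from each entry (t, i_t) for r ≤ t ≤ s−1 does not satisfy the graph G_σ; that is, there exist 1 ≤ i < k ≤ n such that either A_σ(k,i) = 1 and l'_{k,i} − l'_{k−1,i} ∉ ℤ_{≥0}, or A_σ(k,i) = −1 and l'_{k−1,i} − l'_{k,i} ∉ ℤ_{>0}. -/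
/-- The array obtained from `T_σ(X)` by adding `ε` to the entry `(t, idx t)` for each
`r ≤ t ≤ s - 1`. -/
noncomputable def shiftedTab (n : ℕ) (σ : Equiv.Perm ℕ) (x : ℕ → ℂ) (r s : ℕ)
    (idx : ℕ → ℕ) (ε : ℂ) (k i : ℕ) : ℂ :=
  tab n σ x k i + if r ≤ k ∧ k ≤ s - 1 ∧ i = idx k then ε else 0

theorem tab_step (n : ℕ) (σ : Equiv.Perm ℕ) (x : ℕ → ℂ) (k i : ℕ) (h1 : 1 ≤ k) (hk : k ≤ n) :
    tab n σ x (k - 1) i = tab n σ x k i + (1 - (Aperm σ k i : ℂ)) / 2 := by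
  rw [tab, dif_neg (by omega), Nat.sub_add_cancel h1]

theorem nat_ne_neg_one (m : ℕ) : (m : ℂ) ≠ -1 := by
  intro h
  have h2 : ((m + 1 : ℕ) : ℂ) = 0 := by push_cast; rw [h]; ring
  have h3 := Nat.cast_eq_zero.mp h2
  omega

/-- if `A_σ(s,r) = -1`, the tableau obtained from `T_σ(X)` by subtracting
`1` from the entries `(t, i_t)`, `r ≤ t ≤ s-1`, does not satisfy `G_σ`. -/
theorem stmt10 (n : ℕ) (hn : 2 ≤ n) (σ : Equiv.Perm ℕ)
    (hσ : ∀ i ∉ Set.Icc 1 n, σ i = i) (x : ℕ → ℂ) (r s : ℕ)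
    (hr : 1 ≤ r) (hrs : r < s) (hs : s ≤ n) (hA : Aperm σ s r = -1)
    (idx : ℕ → ℕ) (hidx : ∀ t : ℕ, r ≤ t → t ≤ s - 1 → 1 ≤ idx t ∧ idx t ≤ t) :
    ∃ i k : ℕ, 1 ≤ i ∧ i < k ∧ k ≤ n ∧
      ((Aperm σ k i = 1 ∧
          ¬∃ m : ℕ, shiftedTab n σ x r s idx (-1) k i -
              shiftedTab n σ x r s idx (-1) (k - 1) i = (m : ℂ)) ∨
       (Aperm σ k i = -1 ∧
          ¬∃ m : ℕ, shiftedTab n σ x r s idx (-1) (k - 1) i -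
              shiftedTab n σ x r s idx (-1) k i = (m : ℂ) + 1)) := by
  by_contra hcon
  push Not at hcon
  have H1 : ∀ i k : ℕ, 1 ≤ i → i < k → k ≤ n → σ.symm i < σ.symm k →
      (r ≤ k ∧ k ≤ s - 1 ∧ i = idx k) → (r ≤ k - 1 ∧ k - 1 ≤ s - 1 ∧ i = idx (k - 1)) := by
    intro i k hi hik hk hlt hd
    by_contra hd'
    have hA1 : Aperm σ k i = 1 := by simp [Aperm, hlt]
    obtain ⟨m, hm⟩ := (hcon i k hi hik hk).1 hA1
    rw [shiftedTab, shiftedTab, if_pos hd, if_neg hd',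
      tab_step n σ x k i (by omega) hk, hA1] at hm
    apply nat_ne_neg_one m
    rw [← hm]; push_cast; ring
  have H2 : ∀ i k : ℕ, 1 ≤ i → i < k → k ≤ n → ¬ σ.symm i < σ.symm k →
      (r ≤ k - 1 ∧ k - 1 ≤ s - 1 ∧ i = idx (k - 1)) → (r ≤ k ∧ k ≤ s - 1 ∧ i = idx k) := by
    intro i k hi hik hk hlt hd
    by_contra hd'
    have hA1 : Aperm σ k i = -1 := by simp [Aperm, hlt]
    obtain ⟨m, hm⟩ := (hcon i k hi hik hk).2 hA1
    rw [shiftedTab, shiftedTab, if_pos hd, if_neg hd',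
      tab_step n σ x k i (by omega) hk, hA1] at hm
    apply nat_ne_neg_one m
    have h4 : (m : ℂ) = (m + 1) - 1 := by ring
    rw [h4, ← hm]; push_cast; ring
  have hle : ∀ t, r ≤ t → t ≤ s - 1 → σ.symm r ≤ σ.symm (idx t) := by
    intro t ht
    induction t, ht using Nat.le_induction with
    | base =>
      intro hts
      obtain ⟨h1, h2⟩ := hidx r le_rfl hts
      rcases h2.eq_or_lt with h | h
      · rw [h]
      · by_contra hc
        have := H1 (idx r) r h1 h (by omega) (by omega) ⟨le_rfl, hts, rfl⟩
        omega
    | succ t ht ih =>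
      intro hts
      refine (ih (by omega)).trans ?_
      by_cases he : idx t = idx (t + 1)
      · rw [he]
      obtain ⟨h1, h2⟩ := hidx t ht (by omega)
      obtain ⟨h3, h4⟩ := hidx (t + 1) (by omega) hts
      have ha : σ.symm (idx t) < σ.symm (t + 1) := by
        by_contra hc
        exact he (H2 (idx t) (t + 1) h1 (by omega) (by omega) hc
          ⟨by omega, by omega, by simp⟩).2.2
      rcases h4.eq_or_lt with h | h
      · rw [h]; exact ha.le
      · by_contra hc
        have h5 := (H1 (idx (t + 1)) (t + 1) h3 h (by omega) (by omega)
          ⟨by omega, hts, rfl⟩).2.2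
        simp only [Nat.add_sub_cancel] at h5
        exact he h5.symm
  have hfin := hle (s - 1) (by omega) le_rfl
  obtain ⟨h1, h2⟩ := hidx (s - 1) (by omega) le_rfl
  have hlt : σ.symm (idx (s - 1)) < σ.symm s := by
    by_contra hc
    have := H2 (idx (s - 1)) s h1 (by omega) hs hc ⟨by omega, le_rfl, rfl⟩
    omega
  have : Aperm σ s r = 1 := by
    rw [Aperm, if_pos (by omega)]
  omega
end

section
/- Let σ ∈ S_n and 1 ≤ k ≤ n−1. (i) If A_σ(k+1,k) = 1, then: (a) for 1 ≤ ℓ < k, A_σ(k+1,ℓ) ≠ A_σ(k,ℓ) if and only if σ^{-1}(k) < σ^{-1}(ℓ) < σ^{-1}(k+1); and (b) for k+2 ≤ ℓ ≤ n, A_σ(ℓ,k) ≠ A_σ(ℓ,k+1) if and only if σ^{-1}(k) < σ^{-1}(ℓ) < σ^{-1}(k+1). (ii) If A_σ(k+1,k) = −1, then: (a) for 1 ≤ ℓ < k, A_σ(k+1,ℓ) ≠ A_σ(k,ℓ) if and only if σ^{-1}(k+1) < σ^{-1}(ℓ) < σ^{-1}(k); and (b) for k+2 ≤ ℓ ≤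 n, A_σ(ℓ,k) ≠ A_σ(ℓ,k+1) if and only if σ^{-1}(k+1) < σ^{-1}(ℓ) < σ^{-1}(k). -/
/-- comparison of the orientations `A_σ(k+1,ℓ)` vs `A_σ(k,ℓ)` and
`A_σ(ℓ,k)` vs `A_σ(ℓ,k+1)`, according to the sign of `A_σ(k+1,k)`. -/
theorem stmt12 (n : ℕ) (hn : 2 ≤ n) (σ : Equiv.Perm ℕ)
    (hσ : ∀ i ∉ Set.Icc 1 n, σ i = i) (k : ℕ) (hk1 : 1 ≤ k) (hk2 : k ≤ n - 1) :
    (Aperm σ (k + 1) k = 1 →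
      (∀ ℓ : ℕ, 1 ≤ ℓ → ℓ < k →
        (Aperm σ (k + 1) ℓ ≠ Aperm σ k ℓ ↔
          σ.symm k < σ.symm ℓ ∧ σ.symm ℓ < σ.symm (k + 1))) ∧
      (∀ ℓ : ℕ, k + 2 ≤ ℓ → ℓ ≤ n →
        (Aperm σ ℓ k ≠ Aperm σ ℓ (k + 1) ↔
          σ.symm k < σ.symm ℓ ∧ σ.symm ℓ < σ.symm (k + 1)))) ∧
    (Aperm σ (k + 1) k = -1 →
      (∀ ℓ : ℕ, 1 ≤ ℓ → ℓ < k →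
        (Aperm σ (k + 1) ℓ ≠ Aperm σ k ℓ ↔
          σ.symm (k + 1) < σ.symm ℓ ∧ σ.symm ℓ < σ.symm k)) ∧
      (∀ ℓ : ℕ, k + 2 ≤ ℓ → ℓ ≤ n →
        (Aperm σ ℓ k ≠ Aperm σ ℓ (k + 1) ↔
          σ.symm (k + 1) < σ.symm ℓ ∧ σ.symm ℓ < σ.symm k))) := by
  have h0 : σ.symm (k + 1) ≠ σ.symm k := fun h => by
    have := σ.symm.injective h
    omega
  have key : ∀ ℓ : ℕ, ℓ ≠ k → ℓ ≠ k + 1 →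
      σ.symm ℓ ≠ σ.symm k ∧ σ.symm ℓ ≠ σ.symm (k + 1) := fun ℓ h1 h2 =>
    ⟨fun h => h1 (σ.symm.injective h), fun h => h2 (σ.symm.injective h)⟩
  unfold Aperm
  refine ⟨fun h => ⟨fun ℓ h1 h2 => ?_, fun ℓ h1 h2 => ?_⟩,
    fun h => ⟨fun ℓ h1 h2 => ?_, fun ℓ h1 h2 => ?_⟩⟩ <;>
  · obtain ⟨h3, h4⟩ := key ℓ (by omega) (by omega)
    generalize σ.symm ℓ = c at *
    generalize σ.symm (k + 1) = b at *
    generalize σ.symm k = a at *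
    split_ifs at h ⊢ <;> omega
end

section
/- For every σ ∈ S_n and 1 ≤ k ≤ n−1: M_k(σ) + m_k(σ) + A_σ(k+1,k) = σ^{-1}(k+1) − σ^{-1}(k), as an identity of integers (where σ^{-1}(k), σ^{-1}(k+1) ∈ {1,…,n}). -/
/-- `M_k(σ) = A_σ(k+1,k) · #{ℓ : k+2 ≤ ℓ ≤ n, A_σ(ℓ,k) ≠ A_σ(ℓ,k+1)}`. -/
def Mk (n : ℕ) (σ : Equiv.Perm ℕ) (k : ℕ) : ℤ :=
  Aperm σ (k + 1) k *
    ((Finset.Icc (k + 2) n).filter (fun ℓ => Aperm σ ℓ k ≠ Aperm σ ℓ (k + 1))).card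

/-- `m_k(σ) = A_σ(k+1,k) · #{ℓ : 1 ≤ ℓ ≤ k-1, A_σ(k+1,ℓ) ≠ A_σ(k,ℓ)}`. -/
def mk' (n : ℕ) (σ : Equiv.Perm ℕ) (k : ℕ) : ℤ :=
  Aperm σ (k + 1) k *
    ((Finset.Icc 1 (k - 1)).filter (fun ℓ => Aperm σ (k + 1) ℓ ≠ Aperm σ k ℓ)).card

/-- `M_k(σ) + m_k(σ) + A_σ(k+1,k) = σ⁻¹(k+1) - σ⁻¹(k)` in `ℤ`. -/
theorem stmt14 (n : ℕ) (hn : 2 ≤ n) (σ : Equiv.Perm ℕ)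
    (hσ : ∀ i ∉ Set.Icc 1 n, σ i = i) (k : ℕ) (hk1 : 1 ≤ k) (hk2 : k ≤ n - 1) :
    Mk n σ k + mk' n σ k + Aperm σ (k + 1) k =
      (σ.symm (k + 1) : ℤ) - (σ.symm k : ℤ) := by
  set p := σ.symm with hp
  have hinj : ∀ x y, p x = p y → x = y := fun x y h => p.injective h
  have hfix : ∀ i, ¬ (1 ≤ i ∧ i ≤ n) → p i = i := by
    intro i hi
    rw [hp, Equiv.symm_apply_eq]
    exact (hσ i (by simpa [Set.mem_Icc] using hi)).symm
  have hrange : ∀ i, (1 ≤ i ∧ i ≤ n) → (1 ≤ p i ∧ p i ≤ n) := by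
    intro i hi
    by_contra hc
    have h1 := hfix (p i) hc
    have h2 := hinj _ _ h1
    rw [h2] at hc
    exact hc hi
  have hk := hrange k (by omega)
  have hk' := hrange (k + 1) (by omega)
  have hne : p k ≠ p (k + 1) := fun h => by have := hinj _ _ h; omega
  have hA : ∀ r s, Aperm σ r s = if p s < p r then 1 else -1 := fun r s => rfl
  have hdisj : Disjoint
      ((Finset.Icc (k + 2) n).filter (fun ℓ => Aperm σ ℓ k ≠ Aperm σ ℓ (k + 1)))
      ((Finset.Icc 1 (k - 1)).filter (fun ℓ => Aperm σ (k + 1) ℓ ≠ Aperm σ k ℓ)) := by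
    rw [Finset.disjoint_left]
    intro x hx hy
    simp only [Finset.mem_filter, Finset.mem_Icc] at hx hy
    omega
  have hS : ((Finset.Icc (k + 2) n).filter (fun ℓ => Aperm σ ℓ k ≠ Aperm σ ℓ (k + 1))) ∪
      ((Finset.Icc 1 (k - 1)).filter (fun ℓ => Aperm σ (k + 1) ℓ ≠ Aperm σ k ℓ)) =
      (Finset.Ioo (min (p k) (p (k + 1))) (max (p k) (p (k + 1)))).map σ.toEmbedding := by
    ext x
    rw [Finset.mem_map_equiv, ← hp]
    simp only [Finset.mem_union, Finset.mem_filter, Finset.mem_Icc, Finset.mem_Ioo, hA]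
    have e1 : p x = p k → x = k := hinj x k
    have e2 : p x = p (k + 1) → x = k + 1 := hinj x (k + 1)
    have e3 : x = k → p x = p k := fun h => by rw [h]
    have e4 : x = k + 1 → p x = p (k + 1) := fun h => by rw [h]
    have e5 := hfix x
    generalize p x = c at *
    generalize p k = a at *
    generalize p (k + 1) = b at *
    split_ifs <;> simp <;> omega
  have hcard := congrArg Finset.card hS
  rw [Finset.card_union_of_disjoint hdisj, Finset.card_map, Nat.card_Ioo] at hcard
  unfold Mk mk'
  rw [← mul_add, ← Nat.cast_add, hcard, hA]
  split_ifs <;> omega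
end

section
/- Let X ∈ ℂ^n, σ ∈ S_n, and T(Y) = T_σ(X) = (y_{k,i}). Then for every 1 ≤ k ≤ n−1: y_{k+1,k+1} − y_{k+1,k} = y_{n,k+1} − y_{n,k} + M_k(σ). -/
theorem step_aux (σ : Equiv.Perm ℕ) (k l : ℕ) (hl : k + 2 ≤ l) :
    Aperm σ l k - Aperm σ l (k + 1) =
      2 * (Aperm σ (k + 1) k * (if Aperm σ l k ≠ Aperm σ l (k + 1) then 1 else 0)) := by
  have h1 : σ.symm l ≠ σ.symm k := fun h => by
    have := σ.symm.injective h
    omega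
  have h2 : σ.symm l ≠ σ.symm (k + 1) := fun h => by
    have := σ.symm.injective h
    omega
  unfold Aperm
  split_ifs <;> first | omega | simp_all

theorem diff_aux (n : ℕ) (σ : Equiv.Perm ℕ) (x : ℕ → ℂ) (k d : ℕ) :
    ∀ m, k + 1 ≤ m → m + d = n →
    tab n σ x m (k + 1) - tab n σ x m k =
      tab n σ x n (k + 1) - tab n σ x n k +
        ((Aperm σ (k + 1) k * ((Finset.Icc (m + 1) n).filter
          (fun ℓ => Aperm σ ℓ k ≠ Aperm σ ℓ (k + 1))).card : ℤ) : ℂ) := by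
  induction d with
  | zero =>
    intro m _ hm
    obtain rfl : m = n := by omega
    simp
  | succ d ih =>
    intro m hk hm
    have h := ih (m + 1) (by omega) (by omega)
    have hs := step_aux σ k (m + 1) (by omega)
    have e : Finset.Icc (m + 1) n = insert (m + 1) (Finset.Icc (m + 1 + 1) n) := by
      ext a
      simp only [Finset.mem_Icc, Finset.mem_insert]
      omega
    have hc : (((Finset.Icc (m + 1) n).filter
          (fun ℓ => Aperm σ ℓ k ≠ Aperm σ ℓ (k + 1))).card : ℤ) =
        (if Aperm σ (m + 1) k ≠ Aperm σ (m + 1) (k + 1) then 1 else 0) +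
        ((Finset.Icc (m + 1 + 1) n).filter
          (fun ℓ => Aperm σ ℓ k ≠ Aperm σ ℓ (k + 1))).card := by
      rw [e, Finset.filter_insert]
      split_ifs with hh
      · rw [Finset.card_insert_of_notMem (by simp)]
        push_cast
        ring
      · simp
    rw [hc]
    have t : ∀ i, tab n σ x m i =
        tab n σ x (m + 1) i + (1 - (Aperm σ (m + 1) i : ℂ)) / 2 := by
      intro i
      rw [tab, dif_neg (by omega)]
    rw [t, t]
    have hs' := congrArg (Int.cast : ℤ → ℂ) hs
    generalize (if Aperm σ (m + 1) k ≠ Aperm σ (m + 1) (k + 1) then (1 : ℤ) else 0) = c at *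
    push_cast at hs' h ⊢
    linear_combination h + hs' / 2

/-- `y_{k+1,k+1} - y_{k+1,k} = y_{n,k+1} - y_{n,k} + M_k(σ)` for the
tableau `T_σ(X)`. -/
theorem stmt15 (n : ℕ) (hn : 2 ≤ n) (σ : Equiv.Perm ℕ)
    (hσ : ∀ i ∉ Set.Icc 1 n, σ i = i) (x : ℕ → ℂ) (k : ℕ)
    (hk1 : 1 ≤ k) (hk2 : k ≤ n - 1) :
    tab n σ x (k + 1) (k + 1) - tab n σ x (k + 1) k =
      tab n σ x n (k + 1) - tab n σ x n k + (Mk n σ k : ℂ) := by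
  exact diff_aux n σ x k (n - (k + 1)) (k + 1) le_rfl (by omega)
end

section
/- Let n ≥ 4 and let X ∈ ℂ^n have four equal entries: x_i = x_j = x_k = x_l for some indices 1 ≤ i < j < k < l ≤ n. Then for every σ ∈ S_n, the tableau T(Y) = T_σ(X) has two equal entries in row n−1; that is, there exist 1 ≤ p < q ≤ n−1 with y_{n−1,p} = y_{n−1,q}. (This is the key step showing that if at least 4 entries of λ + ℘ are equal, then the tableau T_σ(σ^{-1}(λ+℘)) is critical for every σ, so λ is not a σ-relation weight for any σ.) -/
/-- if `n ≥ 4` and `X ∈ ℂ^n` has four equal entries, then for every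
`σ ∈ S_n` the tableau `T_σ(X)` has two equal entries in row `n - 1`. -/
theorem stmt17 (n : ℕ) (hn : 4 ≤ n) (x : ℕ → ℂ) (i j k l : ℕ)
    (h1 : 1 ≤ i) (hij : i < j) (hjk : j < k) (hkl : k < l) (hl : l ≤ n)
    (hx1 : x i = x j) (hx2 : x j = x k) (hx3 : x k = x l) :
    ∀ σ : Equiv.Perm ℕ, (∀ m ∉ Set.Icc 1 n, σ m = m) →
      ∃ p q : ℕ, 1 ≤ p ∧ p < q ∧ q ≤ n - 1 ∧
        tab n σ x (n - 1) p = tab n σ x (n - 1) q := by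
  intro σ _
  have key : ∀ t, tab n σ x (n - 1) t = x t + (1 - (Aperm σ n t : ℂ)) / 2 := by
    intro t
    have e : n - 1 + 1 = n := by omega
    rw [tab, dif_neg (by omega), e, tab, dif_pos le_rfl]
  have hA : ∀ t, Aperm σ n t = 1 ∨ Aperm σ n t = -1 := by
    intro t
    unfold Aperm
    split_ifs <;> simp
  have fin : Aperm σ n i = Aperm σ n j ∨ Aperm σ n i = Aperm σ n k ∨
      Aperm σ n j = Aperm σ n k := by
    rcases hA i with a | a <;> rcases hA j with b | b <;> rcases hA k with c | c <;>
      simp [a, b, c]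
  rcases fin with h | h | h
  · exact ⟨i, j, h1, hij, by omega, by rw [key, key, h, hx1]⟩
  · exact ⟨i, k, h1, by omega, by omega, by rw [key, key, h, hx1, hx2]⟩
  · exact ⟨j, k, by omega, hjk, by omega, by rw [key, key, h, hx2]⟩
end

section
/- Let τ ∈ S_n, let s_k be a simple transposition (1 ≤ k ≤ n−1), let X ∈ ℂ^n, and set T(R) = T_τ(X) and T(W) = T_{s_k∘τ}(s_k·X). Then for every 1 ≤ j ≤ k−1: w_{k,j} = r_{k,j} + (A_τ(k+1,j) − A_τ(k,j))/2. -/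
theorem Aperm_swap_mul (τ : Equiv.Perm ℕ) (a b r s : ℕ) :
    Aperm (Equiv.swap a b * τ) r s = Aperm τ (Equiv.swap a b r) (Equiv.swap a b s) := by
  have h : ∀ m, (Equiv.swap a b * τ).symm m = τ.symm (Equiv.swap a b m) := by
    intro m
    rw [Equiv.symm_apply_eq]
    simp
  simp only [Aperm, h]

theorem tab_swap_eq (n : ℕ) (τ : Equiv.Perm ℕ) (k j : ℕ) (hj : j < k) (x : ℕ → ℂ) :
    ∀ d l : ℕ, n - l = d → k + 1 ≤ l →
      tab n (Equiv.swap k (k + 1) * τ) (fun m => x (Equiv.swap k (k + 1) m)) l j =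
        tab n τ x l j := by
  have hsj : Equiv.swap k (k + 1) j = j :=
    Equiv.swap_apply_of_ne_of_ne (by omega) (by omega)
  intro d
  induction d with
  | zero =>
    intro l hl _
    have h : n ≤ l := by omega
    rw [tab, tab.eq_1 n τ, dif_pos h, dif_pos h, hsj]
  | succ d ih =>
    intro l hl hkl
    have h : ¬ n ≤ l := by omega
    rw [tab, tab.eq_1 n τ, dif_neg h, dif_neg h, ih (l + 1) (by omega) (by omega),
      Aperm_swap_mul, hsj, Equiv.swap_apply_of_ne_of_ne (by omega) (by omega)]

/-- with `T(R) = T_τ(X)` and `T(W) = T_{s_k ∘ τ}(s_k · X)`, for every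
`1 ≤ j ≤ k - 1` we have `w_{k,j} = r_{k,j} + (A_τ(k+1,j) - A_τ(k,j))/2`. -/
theorem stmt18 (n : ℕ) (hn : 2 ≤ n) (τ : Equiv.Perm ℕ)
    (hτ : ∀ i ∉ Set.Icc 1 n, τ i = i) (k : ℕ) (hk1 : 1 ≤ k) (hk2 : k ≤ n - 1)
    (x : ℕ → ℂ) :
    ∀ j : ℕ, 1 ≤ j → j ≤ k - 1 →
      tab n (Equiv.swap k (k + 1) * τ) (fun m => x (Equiv.swap k (k + 1) m)) k j =
        tab n τ x k j + ((Aperm τ (k + 1) j : ℂ) - (Aperm τ k j : ℂ)) / 2 := by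
  intro j hj1 hj2
  have hsj : Equiv.swap k (k + 1) j = j :=
    Equiv.swap_apply_of_ne_of_ne (by omega) (by omega)
  have h : ¬ n ≤ k := by omega
  rw [tab, tab.eq_1 n τ, dif_neg h, dif_neg h,
    tab_swap_eq n τ k j (by omega) x _ (k + 1) rfl le_rfl,
    Aperm_swap_mul, hsj, Equiv.swap_apply_right]
  ring
end

section
/- Let τ ∈ S_n, let s_k be a simple transposition (1 ≤ k ≤ n−1), let X ∈ ℂ^n, and set T(R) = T_τ(X) and T(W) = T_{s_k∘τ}(s_k·X). Then w_{k,k} = r_{k,k} + r_{n,k+1} − r_{n,k} + M_k(τ) + A_τ(k+1,k), where the integers M_k(τ) and A_τ(k+1,k) are viewed in ℂ. -/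
theorem stmt19_aux (n : ℕ) (τ : Equiv.Perm ℕ) (k : ℕ) (x : ℕ → ℂ) (d : ℕ) :
    ∀ m, k + 1 ≤ m → m + d = n →
    tab n (Equiv.swap k (k + 1) * τ) (fun m => x (Equiv.swap k (k + 1) m)) m k =
      tab n τ x m k + x (k + 1) - x k + (Aperm τ (k + 1) k : ℂ) *
      (((Finset.Icc (m + 1) n).filter
        (fun ℓ => Aperm τ ℓ k ≠ Aperm τ ℓ (k + 1))).card : ℂ) := by
  induction d with
  | zero =>
    intro m hm hd
    have h : n ≤ m := by omega
    rw [tab, tab.eq_1 n τ, dif_pos h, dif_pos h, Finset.Icc_eq_empty (by omega)]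
    simp
  | succ d ih =>
    intro m hm hd
    have h : ¬ n ≤ m := by omega
    rw [tab, tab.eq_1 n τ, dif_neg h, dif_neg h, ih (m + 1) (by omega) (by omega)]
    have hA : Aperm (Equiv.swap k (k + 1) * τ) (m + 1) k = Aperm τ (m + 1) (k + 1) := by
      have h1 : (Equiv.swap k (k + 1) * τ).symm (m + 1) = τ.symm (m + 1) := by
        rw [Equiv.symm_apply_eq, Equiv.Perm.mul_apply, Equiv.apply_symm_apply,
          Equiv.swap_apply_of_ne_of_ne (by omega) (by omega)]
      have h2 : (Equiv.swap k (k + 1) * τ).symm k = τ.symm (k + 1) := by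
        rw [Equiv.symm_apply_eq, Equiv.Perm.mul_apply, Equiv.apply_symm_apply,
          Equiv.swap_apply_right]
      simp only [Aperm, h1, h2]
    have hI : Finset.Icc (m + 1) n = insert (m + 1) (Finset.Icc (m + 1 + 1) n) := by
      ext a
      simp only [Finset.mem_Icc, Finset.mem_insert]
      omega
    rw [hA, hI, Finset.filter_insert]
    by_cases hne : Aperm τ (m + 1) k ≠ Aperm τ (m + 1) (k + 1)
    · rw [if_pos hne, Finset.card_insert_of_notMem (by simp)]
      have key : Aperm τ (m + 1) k - Aperm τ (m + 1) (k + 1) = 2 * Aperm τ (k + 1) k := by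
        revert hne
        unfold Aperm
        split_ifs <;> intro hne <;> first | omega | simp_all
      have key' : (Aperm τ (m + 1) k : ℂ) - Aperm τ (m + 1) (k + 1)
          = 2 * Aperm τ (k + 1) k := by exact_mod_cast key
      push_cast
      linear_combination key' / 2
    · rw [if_neg hne]
      push Not at hne
      rw [hne]
      ring

/-- with `T(R) = T_τ(X)` and `T(W) = T_{s_k ∘ τ}(s_k · X)`,
`w_{k,k} = r_{k,k} + r_{n,k+1} - r_{n,k} + M_k(τ) + A_τ(k+1,k)`. -/
theorem stmt19 (n : ℕ) (hn : 2 ≤ n) (τ : Equiv.Perm ℕ)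
    (hτ : ∀ i ∉ Set.Icc 1 n, τ i = i) (k : ℕ) (hk1 : 1 ≤ k) (hk2 : k ≤ n - 1)
    (x : ℕ → ℂ) :
    tab n (Equiv.swap k (k + 1) * τ) (fun m => x (Equiv.swap k (k + 1) m)) k k =
      tab n τ x k k + tab n τ x n (k + 1) - tab n τ x n k +
        (Mk n τ k : ℂ) + (Aperm τ (k + 1) k : ℂ) := by
  have h : ¬ n ≤ k := by omega
  have hA : Aperm (Equiv.swap k (k + 1) * τ) (k + 1) k = - Aperm τ (k + 1) k := by
    have h1 : (Equiv.swap k (k + 1) * τ).symm (k + 1) = τ.symm k := by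
      rw [Equiv.symm_apply_eq, Equiv.Perm.mul_apply, Equiv.apply_symm_apply,
        Equiv.swap_apply_left]
    have h2 : (Equiv.swap k (k + 1) * τ).symm k = τ.symm (k + 1) := by
      rw [Equiv.symm_apply_eq, Equiv.Perm.mul_apply, Equiv.apply_symm_apply,
        Equiv.swap_apply_right]
    have h3 : τ.symm k ≠ τ.symm (k + 1) := fun e => by
      have := τ.symm.injective e
      omega
    simp only [Aperm, h1, h2]
    split_ifs <;> omega
  have hn1 : ∀ i, tab n τ x n i = x i := fun i => by rw [tab, dif_pos le_rfl]
  rw [hn1, hn1, tab, tab.eq_1 n τ, dif_neg h, dif_neg h,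
    stmt19_aux n τ k x (n - (k + 1)) (k + 1) le_rfl (by omega), hA, Mk]
  push_cast
  ring
end
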